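/- ψ(3/10) = −γ − ln 20 − (√(10 − 2√5)/(1 + √5))·(π/2) + (1/2)·(√5·ln(2 + √5) − ln √5), where ψ is the digamma function and γ is the Euler–Mascheroni constant. -/

import Mathlib

noncomputable def digamma (x : ℝ) : ℝ := deriv Real.Gamma x / Real.Gamma x

open Filter Topology Finset

lemma dg_diff {x : ℝ} (hx : 0 < x) : DifferentiableAt ℝ Real.Gamma x :=
  Real.differentiableAt_Gamma fun m => ((neg_nonpos.mpr m.cast_nonneg).trans_lt hx).ne'

lemma dg_eq {x : ℝ} (hx : 0 < x) : deriv (Real.log ∘ Real.Gamma) x = digamma x := by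
  rw [Function.comp_def, deriv.log (dg_diff hx) (Real.Gamma_pos_of_pos hx).ne', digamma]

lemma dg_f_diff {x : ℝ} (hx : 0 < x) : DifferentiableAt ℝ (Real.log ∘ Real.Gamma) x :=
  (dg_diff hx).log (Real.Gamma_pos_of_pos hx).ne'

lemma dg_f_rec {x : ℝ} (hx : 0 < x) :
    (Real.log ∘ Real.Gamma) (x + 1) = (Real.log ∘ Real.Gamma) x + Real.log x := by
  simp only [Function.comp_apply, Real.Gamma_add_one hx.ne',
    Real.log_mul hx.ne' (Real.Gamma_pos_of_pos hx).ne', add_comm]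

lemma dg_rec {x : ℝ} (hx : 0 < x) : digamma (x + 1) = digamma x + 1 / x := by
  rw [← dg_eq hx, ← dg_eq (by positivity), ← deriv_comp_add_const, one_div, ← Real.deriv_log,
    ← deriv_add (dg_f_diff hx) (Real.differentiableAt_log hx.ne')]
  apply EventuallyEq.deriv_eq
  filter_upwards [eventually_gt_nhds hx] with y hy using dg_f_rec hy

lemma dg_nat {x : ℝ} (hx : 0 < x) (n : ℕ) :
    digamma (x + n) = digamma x + ∑ k ∈ range n, 1 / (x + k) := by
  induction n with
  | zero => simp
  | succ n ih =>
    rw [sum_range_succ, Nat.cast_succ, ← add_assoc, dg_rec (by positivity), ih]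
    ring

lemma dg_ub {x : ℝ} (hx : 0 < x) : digamma x ≤ Real.log x := by
  rw [← dg_eq hx]
  refine (Real.convexOn_log_Gamma.deriv_le_slope (Set.mem_Ioi.2 hx)
    (Set.mem_Ioi.2 (by positivity : 0 < x + 1)) (by linarith) (dg_f_diff hx)).trans (le_of_eq ?_)
  rw [slope_def_field, dg_f_rec hx]
  ring

lemma dg_lb {x : ℝ} (hx : 0 < x) : Real.log x ≤ digamma (x + 1) := by
  rw [← dg_eq (by positivity)]
  refine (le_of_eq ?_).trans (Real.convexOn_log_Gamma.slope_le_deriv (Set.mem_Ioi.2 hx)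
    (Set.mem_Ioi.2 (by positivity : 0 < x + 1)) (by linarith) (dg_f_diff (by positivity)))
  rw [slope_def_field, dg_f_rec hx]
  ring

lemma dg_log_shift (c : ℝ) :
    Tendsto (fun n : ℕ => Real.log (c + n) - Real.log n) atTop (𝓝 0) := by
  have h1 : Tendsto (fun n : ℕ => c / (n : ℝ) + 1) atTop (𝓝 (0 + 1)) :=
    (tendsto_const_div_atTop_nhds_zero_nat c).add_const 1
  have h2 := (Real.continuousAt_log (by norm_num : (0 + 1 : ℝ) ≠ 0)).tendsto.comp h1
  simp only [zero_add, Real.log_one] at h2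
  refine h2.congr' ?_
  have h3 : ∀ᶠ n : ℕ in atTop, -c < (n : ℝ) :=
    tendsto_natCast_atTop_atTop.eventually_gt_atTop (-c)
  filter_upwards [h3, eventually_gt_atTop 0] with n hn hn0
  have : (0 : ℝ) < n := by exact_mod_cast hn0
  rw [← Real.log_div (by linarith) this.ne']
  simp only [Function.comp_apply]
  congr 1
  field_simp

lemma dg_lim {x : ℝ} (hx : 0 < x) :
    Tendsto (fun n : ℕ => Real.log n - ∑ k ∈ range n, 1 / (x + k)) atTop (𝓝 (digamma x)) := by
  have h : Tendsto (fun n : ℕ => digamma (x + n) - Real.log n) atTop (𝓝 0) := by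
    refine tendsto_of_tendsto_of_tendsto_of_le_of_le' (dg_log_shift (x - 1)) (dg_log_shift x) ?_ ?_
    · filter_upwards [eventually_gt_atTop 0] with n hn
      have : (1 : ℝ) ≤ n := by exact_mod_cast hn
      have := dg_lb (x := x - 1 + n) (by linarith)
      rw [show x - 1 + (n : ℝ) + 1 = x + n by ring] at this
      linarith
    · filter_upwards with n
      have := dg_ub (x := x + n) (by positivity)
      linarith
  have h2 := h.const_sub (digamma x)
  rw [sub_zero] at h2
  refine h2.congr fun n => ?_
  rw [dg_nat hx]; ring

lemma dg_one : digamma 1 = -Real.eulerMascheroniConstant := by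
  rw [digamma, Real.hasDerivAt_Gamma_one.deriv, Real.Gamma_one, div_one]

lemma dg_dup {x : ℝ} (hx : 0 < x) :
    digamma x + digamma (x + 1 / 2) = 2 * digamma (2 * x) - 2 * Real.log 2 := by
  have h1 := (dg_lim hx).add (dg_lim (x := x + 1 / 2) (by positivity))
  have h2 := (((dg_lim (x := 2 * x) (by positivity)).comp
    (tendsto_id.const_mul_atTop' (by norm_num : 0 < 2))).const_mul 2).sub_const (2 * Real.log 2)
  refine tendsto_nhds_unique h1 (h2.congr' ?_)
  filter_upwards [eventually_gt_atTop 0] with n hn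
  have hn' : (n : ℝ) ≠ 0 := by exact_mod_cast hn.ne'
  have key : ∀ n : ℕ, 2 * ∑ k ∈ range (2 * n), 1 / (2 * x + k) =
      ∑ k ∈ range n, 1 / (x + k) + ∑ k ∈ range n, 1 / (x + 1 / 2 + k) := by
    intro n
    induction n with
    | zero => simp
    | succ n ih =>
      rw [show 2 * (n + 1) = 2 * n + 1 + 1 by ring]
      simp only [sum_range_succ, mul_add, ih]
      have e1 : x + n ≠ 0 := by positivity
      have e2 : x + 1 / 2 + n ≠ 0 := by positivity
      have : 2 * (1 / (2 * x + (2 * n : ℕ))) = 1 / (x + n) := by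
        push_cast; rw [← mul_add]; field_simp
      have : 2 * (1 / (2 * x + (2 * n + 1 : ℕ))) = 1 / (x + 1 / 2 + n) := by
        push_cast
        rw [show 2 * x + (2 * (n : ℝ) + 1) = 2 * (x + 1 / 2 + n) by ring]; field_simp
      linarith
  have := key n
  simp only [Function.comp_apply, id]
  rw [Nat.cast_mul, Real.log_mul (by norm_num) hn', mul_sub, this]
  push_cast
  ring

lemma dg_five : digamma (1 / 5) + digamma (2 / 5) + digamma (3 / 5) + digamma (4 / 5) + digamma 1
    = 5 * digamma 1 - 5 * Real.log 5 := by
  have h1 := ((((dg_lim (x := 1 / 5) (by norm_num)).add (dg_lim (x := 2 / 5) (by norm_num))).add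
    (dg_lim (x := 3 / 5) (by norm_num))).add (dg_lim (x := 4 / 5) (by norm_num))).add
    (dg_lim (x := 1) (by norm_num))
  have h2 := (((dg_lim (x := 1) (by positivity)).comp
    (tendsto_id.const_mul_atTop' (by norm_num : 0 < 5))).const_mul 5).sub_const (5 * Real.log 5)
  refine tendsto_nhds_unique h1 (h2.congr' ?_)
  filter_upwards [eventually_gt_atTop 0] with n hn
  have hn' : (n : ℝ) ≠ 0 := by exact_mod_cast hn.ne'
  have key : ∀ n : ℕ, 5 * ∑ k ∈ range (5 * n), 1 / ((1 : ℝ) + k) =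
      ∑ k ∈ range n, 1 / ((1 / 5 : ℝ) + k) + ∑ k ∈ range n, 1 / ((2 / 5 : ℝ) + k)
      + ∑ k ∈ range n, 1 / ((3 / 5 : ℝ) + k) + ∑ k ∈ range n, 1 / ((4 / 5 : ℝ) + k)
      + ∑ k ∈ range n, 1 / ((1 : ℝ) + k) := by
    intro n
    induction n with
    | zero => simp
    | succ n ih =>
      rw [show 5 * (n + 1) = 5 * n + 1 + 1 + 1 + 1 + 1 by ring]
      simp only [sum_range_succ, mul_add, ih]
      have gen : ∀ a b : ℝ, 0 < a → b = 5 * a → 5 * (1 / b) = 1 / a := by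
        intro a b ha hb; rw [hb]; field_simp
      rw [gen (1 / 5 + n) _ (by positivity) (by push_cast; ring),
        gen (2 / 5 + n) _ (by positivity) (by push_cast; ring),
        gen (3 / 5 + n) _ (by positivity) (by push_cast; ring),
        gen (4 / 5 + n) _ (by positivity) (by push_cast; ring),
        gen (1 + n) _ (by positivity) (by push_cast; ring)]
      ring
  have := key n
  simp only [Function.comp_apply, id]
  rw [Nat.cast_mul, Real.log_mul (by norm_num) hn', mul_sub, this]
  push_cast
  ring

lemma dg_refl {x : ℝ} (hx : 0 < x) (hx1 : x < 1) :
    digamma (1 - x) - digamma x = Real.pi * (Real.cos (Real.pi * x) / Real.sin (Real.pi * x)) := by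
  have hs : 0 < Real.sin (Real.pi * x) :=
    Real.sin_pos_of_pos_of_lt_pi (by positivity) (by nlinarith [Real.pi_pos])
  have h1 : HasDerivAt (fun s => Real.Gamma s * Real.Gamma (1 - s)) _ x :=
    (dg_diff hx).hasDerivAt.mul
      (HasDerivAt.comp_const_sub (f := Real.Gamma) 1 x (dg_diff (by linarith)).hasDerivAt)
  have h2 : HasDerivAt (fun s => Real.pi / Real.sin (Real.pi * s)) _ x :=
    (hasDerivAt_const x Real.pi).div (((hasDerivAt_id x).const_mul Real.pi).sin) hs.ne'
  have h0 : (fun s => Real.Gamma s * Real.Gamma (1 - s)) =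
    (fun s => Real.pi / Real.sin (Real.pi * s)) := funext Real.Gamma_mul_Gamma_one_sub
  rw [h0] at h1
  have h3 := h1.unique h2
  have h4 := Real.Gamma_mul_Gamma_one_sub x
  have g1 := Real.Gamma_pos_of_pos hx
  have g2 := Real.Gamma_pos_of_pos (show 0 < 1 - x by linarith)
  have h5 : digamma (1 - x) - digamma x = -(deriv Real.Gamma x * Real.Gamma (1 - x) +
      Real.Gamma x * -deriv Real.Gamma (1 - x)) / (Real.Gamma x * Real.Gamma (1 - x)) := by
    unfold digamma; field_simp; ring
  rw [h5, h3, h4]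
  simp only [id]
  have := Real.pi_pos
  field_simp
  ring

/-- partial sums of the L-series as integrals -/
lemma dg_partial (n : ℕ) :
    ∑ k ∈ range n, (1 / ((1 / 5 : ℝ) + k) - 1 / (2 / 5 + k) - 1 / (3 / 5 + k) + 1 / (4 / 5 + k)) =
    5 * ∫ t in (0 : ℝ)..1, ∑ k ∈ range n,
      (t ^ (5 * k) - t ^ (5 * k + 1) - t ^ (5 * k + 2) + t ^ (5 * k + 3)) := by
  rw [intervalIntegral.integral_finsetSum
    (fun i _ => Continuous.intervalIntegrable (by fun_prop) _ _), mul_sum]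
  refine sum_congr rfl fun k _ => ?_
  rw [intervalIntegral.integral_add (Continuous.intervalIntegrable (by fun_prop) _ _)
    (Continuous.intervalIntegrable (by fun_prop) _ _),
    intervalIntegral.integral_sub (Continuous.intervalIntegrable (by fun_prop) _ _)
    (Continuous.intervalIntegrable (by fun_prop) _ _),
    intervalIntegral.integral_sub (Continuous.intervalIntegrable (by fun_prop) _ _)
    (Continuous.intervalIntegrable (by fun_prop) _ _)]
  simp only [integral_pow]
  have gen : ∀ a b : ℝ, 0 < a → b = 5 * a → 5 * (1 / b) = 1 / a := by
    intro a b ha hb; rw [hb]; field_simp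
  simp only [one_pow, ne_eq, Nat.succ_ne_zero, not_false_eq_true, zero_pow, sub_zero, mul_add,
    mul_sub]
  rw [gen (1 / 5 + k) _ (by positivity) (by push_cast; ring),
    gen (2 / 5 + k) _ (by positivity) (by push_cast; ring),
    gen (3 / 5 + k) _ (by positivity) (by push_cast; ring),
    gen (4 / 5 + k) _ (by positivity) (by push_cast; ring)]

lemma dg_D_pos {t : ℝ} (ht : 0 ≤ t) : 0 < 1 + t + t ^ 2 + t ^ 3 + t ^ 4 := by positivity

lemma dg_geom {t : ℝ} (ht : 0 ≤ t) (n : ℕ) :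
    ∑ k ∈ range n, (t ^ (5 * k) - t ^ (5 * k + 1) - t ^ (5 * k + 2) + t ^ (5 * k + 3)) =
    (1 - t ^ 2) / (1 + t + t ^ 2 + t ^ 3 + t ^ 4) * (1 - t ^ (5 * n)) := by
  have hD := dg_D_pos ht
  induction n with
  | zero => simp
  | succ n ih =>
    rw [sum_range_succ, ih]
    field_simp
    ring

lemma dg_int_lim : Tendsto (fun n : ℕ => ∫ t in (0 : ℝ)..1, ∑ k ∈ range n,
      (t ^ (5 * k) - t ^ (5 * k + 1) - t ^ (5 * k + 2) + t ^ (5 * k + 3))) atTop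
    (𝓝 (∫ t in (0 : ℝ)..1, (1 - t ^ 2) / (1 + t + t ^ 2 + t ^ 3 + t ^ 4))) := by
  have hci : IntervalIntegrable (fun t : ℝ => (1 - t ^ 2) / (1 + t + t ^ 2 + t ^ 3 + t ^ 4))
      MeasureTheory.volume 0 1 := by
    apply ContinuousOn.intervalIntegrable
    apply ContinuousOn.div (by fun_prop) (by fun_prop)
    intro t ht
    rw [Set.uIcc_of_le zero_le_one] at ht
    exact (dg_D_pos ht.1).ne'
  rw [tendsto_iff_norm_sub_tendsto_zero]
  have hz : Tendsto (fun n : ℕ => 1 / ((n : ℝ) + 1)) atTop (𝓝 0) :=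
    tendsto_one_div_add_atTop_nhds_zero_nat
  refine squeeze_zero (fun _ => norm_nonneg _) (fun n => ?_) hz
  rw [← intervalIntegral.integral_sub (Continuous.intervalIntegrable (by fun_prop) _ _) hci]
  have hb : ‖∫ t in (0 : ℝ)..1, (∑ k ∈ range n,
      (t ^ (5 * k) - t ^ (5 * k + 1) - t ^ (5 * k + 2) + t ^ (5 * k + 3)) -
      (1 - t ^ 2) / (1 + t + t ^ 2 + t ^ 3 + t ^ 4))‖ ≤ ∫ t in (0 : ℝ)..1, t ^ n := by
    apply intervalIntegral.norm_integral_le_of_norm_le zero_le_one _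
      (Continuous.intervalIntegrable (by fun_prop) _ _)
    refine Eventually.of_forall fun t ht => ?_
    have h0 := ht.1.le
    have h1 := ht.2
    have hD := dg_D_pos h0
    rw [dg_geom h0]
    have e : (1 - t ^ 2) / (1 + t + t ^ 2 + t ^ 3 + t ^ 4) * (1 - t ^ (5 * n)) -
      (1 - t ^ 2) / (1 + t + t ^ 2 + t ^ 3 + t ^ 4) =
      -((1 - t ^ 2) / (1 + t + t ^ 2 + t ^ 3 + t ^ 4) * t ^ (5 * n)) := by ring
    have q0 : 0 ≤ 1 - t ^ 2 := by nlinarith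
    rw [e, norm_neg, Real.norm_of_nonneg (by positivity)]
    have q1 : (1 - t ^ 2) / (1 + t + t ^ 2 + t ^ 3 + t ^ 4) ≤ 1 := by
      rw [div_le_one hD]
      have : 0 ≤ t + t ^ 2 + t ^ 3 + t ^ 4 := by positivity
      nlinarith [sq_nonneg t]
    have q2 : t ^ (5 * n) ≤ t ^ n := pow_le_pow_of_le_one h0 h1 (by omega)
    calc _ ≤ 1 * t ^ (5 * n) := by gcongr
      _ ≤ _ := by rw [one_mul]; exact q2
  refine hb.trans (le_of_eq ?_)
  rw [integral_pow]; simp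

lemma dg_integral : ∫ t in (0 : ℝ)..1, (1 - t ^ 2) / (1 + t + t ^ 2 + t ^ 3 + t ^ 4) =
    (2 / 3) / Real.sqrt 5 * Real.log (2 + Real.sqrt 5) := by
  set s := Real.sqrt 5 with hs
  have s2 : s ^ 2 = 5 := Real.sq_sqrt (by norm_num)
  have spos : 0 < s := Real.sqrt_pos.2 (by norm_num)
  have s3 : s < 3 := by nlinarith
  have p1 : ∀ t : ℝ, 0 ≤ t → 0 < 1 + (1 + s) / 2 * t + t ^ 2 := fun t ht => by positivity
  have p2 : ∀ t : ℝ, 0 ≤ t → 0 < 1 + (1 - s) / 2 * t + t ^ 2 := fun t ht => by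
    nlinarith [sq_nonneg (1 - t)]
  have hd : ∀ t ∈ Set.uIcc (0 : ℝ) 1, HasDerivAt
      (fun t => 1 / s * (Real.log (1 + (1 + s) / 2 * t + t ^ 2)
        - Real.log (1 + (1 - s) / 2 * t + t ^ 2)))
      ((1 - t ^ 2) / (1 + t + t ^ 2 + t ^ 3 + t ^ 4)) t := by
    intro t ht
    rw [Set.uIcc_of_le zero_le_one] at ht
    have a1 := p1 t ht.1
    have a2 := p2 t ht.1
    have hq : ∀ c : ℝ, HasDerivAt (fun t : ℝ => 1 + c * t + t ^ 2) (c + 2 * t) t := fun c => by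
      have := (((hasDerivAt_id t).const_mul c).const_add 1).add (hasDerivAt_pow 2 t)
      refine this.congr_deriv ?_
      simp
    have := (((hq ((1 + s) / 2)).log a1.ne').sub ((hq ((1 - s) / 2)).log a2.ne')).const_mul (1 / s)
    refine this.congr_deriv ?_
    have hprod : 1 + t + t ^ 2 + t ^ 3 + t ^ 4 =
      (1 + (1 + s) / 2 * t + t ^ 2) * (1 + (1 - s) / 2 * t + t ^ 2) := by
      linear_combination (t ^ 2 / 4) * s2
    rw [hprod, div_sub_div _ _ a1.ne' a2.ne', ← mul_div_assoc]
    congr 1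
    rw [one_div, inv_mul_eq_iff_eq_mul₀ spos.ne']
    ring
  rw [intervalIntegral.integral_eq_sub_of_hasDerivAt hd]
  · have b1 := p1 1 zero_le_one
    have b2 := p2 1 zero_le_one
    have e1 : Real.log (1 + (1 + s) / 2 * 1 + 1 ^ 2) - Real.log (1 + (1 - s) / 2 * 1 + 1 ^ 2) =
      2 * Real.log ((1 + s) / 2) := by
      have e0 : Real.log (((1 + s) / 2) ^ 2) = 2 * Real.log ((1 + s) / 2) := by
        rw [Real.log_pow]; norm_num
      rw [← Real.log_div b1.ne' b2.ne', ← e0]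
      congr 1
      rw [div_eq_iff b2.ne']
      linear_combination ((s - 3) / 8) * s2
    have e2 : Real.log (2 + s) = 3 * Real.log ((1 + s) / 2) := by
      rw [show (3 : ℝ) = ((3 : ℕ) : ℝ) by norm_num, ← Real.log_pow]
      congr 1
      linear_combination (-(s + 3) / 8) * s2
    rw [e1, e2]
    simp
    ring
  · apply ContinuousOn.intervalIntegrable
    apply ContinuousOn.div (by fun_prop) (by fun_prop)
    intro t ht
    rw [Set.uIcc_of_le zero_le_one] at ht
    exact (dg_D_pos ht.1).ne'

lemma dg_chi : digamma (1 / 5) - digamma (2 / 5) - digamma (3 / 5) + digamma (4 / 5) =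
    -(5 * ((2 / 3) / Real.sqrt 5 * Real.log (2 + Real.sqrt 5))) := by
  have h1 := (((dg_lim (x := 1 / 5) (by norm_num)).sub (dg_lim (x := 2 / 5) (by norm_num))).sub
    (dg_lim (x := 3 / 5) (by norm_num))).add (dg_lim (x := 4 / 5) (by norm_num))
  have h2 := (dg_int_lim.const_mul 5).neg
  rw [dg_integral] at h2
  refine tendsto_nhds_unique h1 (h2.congr fun n => ?_)
  rw [← dg_partial]
  simp only [sum_add_distrib, sum_sub_distrib]
  ring

lemma dg_tan : Real.cos (Real.pi * (2 / 5)) / Real.sin (Real.pi * (2 / 5)) -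
    Real.cos (Real.pi * (1 / 5)) / Real.sin (Real.pi * (1 / 5)) / 2 =
    -(Real.sqrt (10 - 2 * Real.sqrt 5) / (1 + Real.sqrt 5)) / 2 := by
  have hc : Real.cos (Real.pi * (1 / 5)) = (1 + Real.sqrt 5) / 4 := by
    rw [← Real.cos_pi_div_five]; congr 1; ring
  have hsp : 0 < Real.sin (Real.pi * (1 / 5)) :=
    Real.sin_pos_of_pos_of_lt_pi (by positivity) (by nlinarith [Real.pi_pos])
  rw [show Real.pi * (2 / 5) = 2 * (Real.pi * (1 / 5)) by ring, Real.cos_two_mul, Real.sin_two_mul]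
  have hsq := Real.sin_sq_add_cos_sq (Real.pi * (1 / 5))
  set c := Real.cos (Real.pi * (1 / 5))
  set d := Real.sin (Real.pi * (1 / 5))
  have s2 : Real.sqrt 5 ^ 2 = 5 := Real.sq_sqrt (by norm_num)
  have spos : 0 < Real.sqrt 5 := Real.sqrt_pos.2 (by norm_num)
  have hd : Real.sqrt (10 - 2 * Real.sqrt 5) = 4 * d := by
    rw [show 10 - 2 * Real.sqrt 5 = (4 * d) ^ 2 by
      rw [hc] at hsq; linear_combination -16 * hsq + s2]
    exact Real.sqrt_sq (by positivity)
  have h1 : 1 + Real.sqrt 5 = 4 * c := by rw [hc]; ring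
  have hcp : 0 < c := by rw [hc]; positivity
  rw [hd, h1]
  field_simp
  linear_combination hsq

theorem digamma_three_tenths :
    digamma (3 / 10) =
      -Real.eulerMascheroniConstant - Real.log 20
        - (Real.sqrt (10 - 2 * Real.sqrt 5) / (1 + Real.sqrt 5)) * (Real.pi / 2)
        + (1 / 2) * (Real.sqrt 5 * Real.log (2 + Real.sqrt 5) - Real.log (Real.sqrt 5)) := by
  have h1 := dg_dup (x := 3 / 10) (by norm_num)
  have h2 := dg_five
  have h3 := dg_chi
  have h4 := dg_refl (x := 1 / 5) (by norm_num) (by norm_num)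
  have h5 := dg_refl (x := 2 / 5) (by norm_num) (by norm_num)
  have h6 := dg_tan
  have h7 : Real.log 20 = 2 * Real.log 2 + Real.log 5 := by
    rw [show (20 : ℝ) = 2 ^ 2 * 5 by norm_num, Real.log_mul (by norm_num) (by norm_num),
      Real.log_pow]
    norm_num
  have h8 : Real.log (Real.sqrt 5) = Real.log 5 / 2 := Real.log_sqrt (by norm_num)
  have s2 : Real.sqrt 5 ^ 2 = 5 := Real.sq_sqrt (by norm_num)
  have spos : 0 < Real.sqrt 5 := Real.sqrt_pos.2 (by norm_num)
  have h9 : 5 * ((2 / 3) / Real.sqrt 5 * Real.log (2 + Real.sqrt 5)) =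
      2 / 3 * (Real.sqrt 5 * Real.log (2 + Real.sqrt 5)) := by
    field_simp
    linear_combination (-Real.log (2 + Real.sqrt 5)) * s2
  rw [h9] at h3
  rw [dg_one] at h2
  norm_num only at h1 h4 h5
  norm_num only at h2 h3 h6
  rw [h7, h8]
  linear_combination h1 + (1/4) * h2 - (3/4) * h3 - (1/2) * h4 + h5 + Real.pi * h6
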